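/- For every nontrivial word w in the free group F_d on d generators, there exists a natural number N such that for every integer n ≥ N, the diagonal matrix diag(e^{2πi/n}, e^{−2πi/n}) belongs to w(SU(2)), the set of w-values in the special unitary group SU(2). -/

import Mathlib

/-- The set of `w`-values in the subgroup of `G` given by the set `S`:
elements obtained by evaluating the word `w` at a `d`-tuple of elements of `S`. -/
def wordValuesIn {d : ℕ} {G : Type*} [Group G] (w : FreeGroup (Fin d)) (S : Set G) : Set G :=
  {x | ∃ g : Fin d → G, (∀ i, g i ∈ S) ∧ FreeGroup.lift g w = x}

/-- `SU(n)`, the special unitary group, as the subset of the unitary group consisting of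
matrices of determinant 1. -/
def SU (n : ℕ) : Set (Matrix.unitaryGroup (Fin n) ℂ) :=
  {M | (M : Matrix (Fin n) (Fin n) ℂ).det = 1}

/-!
Attach to the `i`-th generator the rotations `g i z = z p + z⁻¹ (1 - p)`, `z` on the unit circle,
where `p` is the orthogonal projection of `ℂ²` onto the line of slope `i`. For a reduced word `w` of
length `ℓ`, `z ^ ℓ • w (g z)` is a polynomial in `z` whose coefficient of degree `2ℓ` is a product
of rank-one projections onto lines of which no two consecutive ones are orthogonal. This product is
nonzero, so `w (g z) ≠ 1` for some `z`, while `w (g 1) = 1`. As `z` runs through the connected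
circle, the trace of `w (g z)` thus takes all values slightly below `2`, and two elements of `SU(2)`
with equal traces are conjugate.
-/

open Matrix Polynomial Filter Topology

section Words

lemma lift_mem_of_forall_mem {α G : Type*} [Group G] {H : Subgroup G} {g : α → G}
    (hg : ∀ i, g i ∈ H) (w : FreeGroup α) : FreeGroup.lift g w ∈ H := by
  have hrange : (FreeGroup.lift g).range ≤ H :=
    FreeGroup.range_lift_le (Set.range_subset_iff.2 hg)
  exact hrange ⟨w, rfl⟩

lemma map_mem_wordValuesIn {d : ℕ} {G G' : Type*} [Group G] [Group G'] {w : FreeGroup (Fin d)}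
    {S : Set G} {S' : Set G'} (φ : G →* G') (hφ : Set.MapsTo φ S S') {x : G}
    (hx : x ∈ wordValuesIn w S) : φ x ∈ wordValuesIn w S' := by
  obtain ⟨g, hg, rfl⟩ := hx
  refine ⟨φ ∘ g, fun i ↦ hφ (hg i), ?_⟩
  have hcomp : FreeGroup.lift (φ ∘ g) = φ.comp (FreeGroup.lift g) := by ext i; simp
  rw [hcomp, MonoidHom.comp_apply]

lemma continuous_lift_apply {α X G : Type*} [TopologicalSpace X] [Group G] [TopologicalSpace G]
    [IsTopologicalGroup G] {g : X → α → G} (hg : ∀ i, Continuous (g · i)) (w : FreeGroup α) :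
    Continuous fun x ↦ FreeGroup.lift (g x) w := by
  induction w using FreeGroup.induction_on with
  | C1 => simpa only [map_one] using continuous_const
  | of i => simpa only [FreeGroup.lift_apply_of] using hg i
  | inv_of i ih => simp only [map_inv]; fun_prop
  | mul u v hu hv => simp only [map_mul]; fun_prop

end Words

section ProjectionRotation

variable {A : Type*} [Ring A] [StarRing A] [Algebra ℂ A] [StarModule ℂ A]

/-- The circle of unitaries acting as `z` on the range of the projection `p` and as `z⁻¹` on its
orthogonal complement. -/
noncomputable def projectionRotation {p : A} (hp : IsStarProjection p) : Circle →* unitary A :=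
  let rotation : Circle →* A :=
    { toFun := fun z ↦ (z : ℂ) • p + ((z⁻¹ : Circle) : ℂ) • (1 - p)
      map_one' := by simp
      map_mul' := fun y z ↦ by
        simp [add_mul, mul_add, hp.isIdempotentElem.eq, hp.isIdempotentElem.one_sub.eq,
          hp.mul_one_sub_self, hp.one_sub_mul_self, smul_smul, mul_comm] }
  have star_rotation (z : Circle) : star (rotation z) = rotation z⁻¹ := by
    simp [rotation, hp.isSelfAdjoint.star_eq, ← Circle.coe_inv_eq_conj]
  rotation.codRestrict (unitary A) fun z ↦ by
    simp [Unitary.mem_iff, star_rotation, ← map_mul]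

lemma coe_projectionRotation {p : A} (hp : IsStarProjection p) (z : Circle) :
    (projectionRotation hp z : A) = (z : ℂ) • p + (z : ℂ)⁻¹ • (1 - p) := by
  rw [← Circle.coe_inv]; rfl

lemma coe_inv_projectionRotation {p : A} (hp : IsStarProjection p) (z : Circle) :
    (((projectionRotation hp z)⁻¹ : unitary A) : A) = (z : ℂ) • (1 - p) + (z : ℂ)⁻¹ • p := by
  rw [← map_inv, coe_projectionRotation, Circle.coe_inv, inv_inv, add_comm]

lemma continuous_projectionRotation [TopologicalSpace A] [ContinuousAdd A] [ContinuousSMul ℂ A]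
    {p : A} (hp : IsStarProjection p) : Continuous (projectionRotation hp) := by
  refine continuous_induced_rng.2 ?_
  simp only [Function.comp_def, coe_projectionRotation, ← Circle.coe_inv]
  fun_prop

/-- The projection attached to a letter of a word: `p i` for the generator `i`, and the
complementary projection `1 - p i` for its inverse. -/
def letterProjection {α R : Type*} [Ring R] (p : α → R) (a : α × Bool) : R :=
  bif a.2 then p a.1 else 1 - p a.1

lemma coe_lift_projectionRotation {α : Type*} {p : α → A} (hp : ∀ i, IsStarProjection (p i))
    (z : Circle) (L : List (α × Bool)) :
    (FreeGroup.lift (fun i ↦ projectionRotation (hp i) z) (FreeGroup.mk L) : A) =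
      (L.map fun a ↦ (z : ℂ) • letterProjection p a +
        (z : ℂ)⁻¹ • (1 - letterProjection p a)).prod := by
  rw [FreeGroup.lift_mk, ← Submonoid.coe_subtype, map_list_prod, List.map_map]
  congr 1
  refine List.map_congr_left ?_
  rintro ⟨i, b⟩ -
  cases b
  · simp [letterProjection, coe_inv_projectionRotation]
  · simp [letterProjection, coe_projectionRotation]

end ProjectionRotation

section LeadingCoefficient

lemma coeff_list_prod_apply_of_natDegree_le {R n : Type*} [CommSemiring R] [Fintype n]
    [DecidableEq n] (L : List (Matrix n n R[X])) (d : ℕ)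
    (hL : ∀ M ∈ L, ∀ i j, (M i j).natDegree ≤ d) (i j : n) :
    (L.prod i j).coeff (L.length * d) = (L.map fun M ↦ M.map (coeff · d)).prod i j := by
  have hdeg : ∀ q ∈ L.map matPolyEquiv, natDegree q ≤ d := by
    simp only [List.mem_map, forall_exists_index, and_imp, forall_apply_eq_imp_iff₂]
    refine fun M hM ↦ natDegree_le_iff_coeff_eq_zero.2 fun k hk ↦ Matrix.ext fun i j ↦ ?_
    rw [matPolyEquiv_coeff_apply, coeff_eq_zero_of_natDegree_lt ((hL M hM i j).trans_lt hk),
      Matrix.zero_apply]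
  have hcoeff := coeff_list_prod_of_natDegree_le _ d hdeg
  rw [List.length_map, List.map_map, ← map_list_prod] at hcoeff
  have hmap : (coeff · d) ∘ matPolyEquiv = fun M : Matrix n n R[X] ↦ M.map (coeff · d) := by
    ext M i j
    exact matPolyEquiv_coeff_apply M d i j
  rw [← matPolyEquiv_coeff_apply, hcoeff, hmap]

variable {K ι n : Type*} [Field K]

/-- The polynomial numerator `z² P + Q` of the matrix-valued Laurent polynomial `z P + z⁻¹ Q`. -/
noncomputable def laurentNumerator (P Q : Matrix n n K) : Matrix n n K[X] :=
  (X ^ 2 : K[X]) • P.map C + Q.map C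

lemma natDegree_laurentNumerator_apply_le (P Q : Matrix n n K) (i j : n) :
    (laurentNumerator P Q i j).natDegree ≤ 2 := by
  simp only [laurentNumerator, Matrix.add_apply, Matrix.smul_apply, Matrix.map_apply, smul_eq_mul]
  compute_degree

lemma map_coeff_two_laurentNumerator (P Q : Matrix n n K) :
    (laurentNumerator P Q).map (coeff · 2) = P := by
  ext i j
  simp [laurentNumerator]

lemma map_eval_laurentNumerator (P Q : Matrix n n K) {z : K} (hz : z ≠ 0) :
    (laurentNumerator P Q).map (eval z) = z • (z • P + z⁻¹ • Q) := by
  ext i j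
  simp only [laurentNumerator, map_apply, Matrix.add_apply, Matrix.smul_apply, smul_eq_mul,
    eval_add, eval_mul, eval_C, eval_pow, eval_X]
  field_simp

variable [Fintype n] [DecidableEq n]

lemma map_eval_prod_laurentNumerator (P Q : ι → Matrix n n K) (L : List ι) {z : K} (hz : z ≠ 0) :
    ((L.map fun a ↦ laurentNumerator (P a) (Q a)).prod).map (eval z) =
      z ^ L.length • (L.map fun a ↦ z • P a + z⁻¹ • Q a).prod := by
  rw [← L.length_map (fun a ↦ z • P a + z⁻¹ • Q a), List.smul_prod, List.map_map]
  change (evalRingHom z).mapMatrix _ = _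
  rw [map_list_prod, List.map_map]
  exact congrArg _ (List.map_congr_left fun a _ ↦ map_eval_laurentNumerator (P a) (Q a) hz)

lemma coeff_prod_laurentNumerator_apply (P Q : ι → Matrix n n K) (L : List ι) (i j : n) :
    ((L.map fun a ↦ laurentNumerator (P a) (Q a)).prod i j).coeff (L.length * 2) =
      (L.map P).prod i j := by
  have hdeg : ∀ M ∈ L.map fun a ↦ laurentNumerator (P a) (Q a),
      ∀ i j, (M i j).natDegree ≤ 2 := by
    simp only [List.mem_map, forall_exists_index, and_imp, forall_apply_eq_imp_iff₂]
    exact fun a _ ↦ natDegree_laurentNumerator_apply_le (P a) (Q a)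
  have hcoeff := coeff_list_prod_apply_of_natDegree_le _ 2 hdeg i j
  rw [List.length_map, List.map_map] at hcoeff
  simpa only [Function.comp_def, map_coeff_two_laurentNumerator] using hcoeff

lemma exists_prod_smul_add_inv_smul_ne_one {S : Set K} (hS : S.Infinite)
    (P Q : ι → Matrix n n K) {L : List ι} (hL : L ≠ []) (hP : (L.map P).prod ≠ 0) :
    ∃ z ∈ S, (L.map fun a ↦ z • P a + z⁻¹ • Q a).prod ≠ 1 := by
  by_contra! hone
  set M := (L.map fun a ↦ laurentNumerator (P a) (Q a)).prod with hM
  have hS0 : (S \ {0}).Infinite := hS.sdiff (Set.finite_singleton 0)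
  have hX (i j : n) : M i j = C ((1 : Matrix n n K) i j) * X ^ L.length := by
    refine eq_of_infinite_eval_eq _ _ (hS0.mono fun z hz ↦ ?_)
    have heval := map_eval_prod_laurentNumerator P Q L hz.2
    rw [hone z hz.1] at heval
    change eval z (M i j) = _
    rw [eval_C_mul, eval_X_pow, mul_comm]
    exact congr_fun₂ heval i j
  refine hP (Matrix.ext fun i j ↦ ?_)
  have hlen : L.length ≠ 0 := List.length_eq_zero_iff.not.2 hL
  rw [← coeff_prod_laurentNumerator_apply P Q L i j, ← hM, hX, coeff_C_mul_X_pow,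
    if_neg (by lia), Matrix.zero_apply]

end LeadingCoefficient

section RankOneProducts

variable {R ι n : Type*} [CommRing R] [IsDomain R] [Fintype n] [DecidableEq n]

lemma exists_prod_vecMulVec_eq (v u : ι → n → R) (hu : ∀ a, u a ≠ 0) (a : ι) (L : List ι)
    (hL : (a :: L).IsChain fun a b ↦ u a ⬝ᵥ v b ≠ 0) :
    ∃ y ≠ 0, ((a :: L).map fun b ↦ vecMulVec (v b) (u b)).prod = vecMulVec (v a) y := by
  induction L generalizing a with
  | nil => exact ⟨u a, hu a, by simp⟩
  | cons b L ih =>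
    rw [List.isChain_cons_cons] at hL
    obtain ⟨y, hy, hprod⟩ := ih b hL.2
    refine ⟨(u a ⬝ᵥ v b) • y, smul_ne_zero hL.1 hy, ?_⟩
    rw [List.map_cons, List.prod_cons, hprod, vecMulVec_mul_vecMulVec]

lemma prod_vecMulVec_ne_zero {v u : ι → n → R} (hv : ∀ a, v a ≠ 0) (hu : ∀ a, u a ≠ 0)
    {L : List ι} (hL₀ : L ≠ []) (hL : L.IsChain fun a b ↦ u a ⬝ᵥ v b ≠ 0) :
    (L.map fun a ↦ vecMulVec (v a) (u a)).prod ≠ 0 := by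
  obtain ⟨a, L, rfl⟩ := List.exists_cons_of_ne_nil hL₀
  obtain ⟨y, hy, hprod⟩ := exists_prod_vecMulVec_eq v u hu a L hL
  rw [hprod]
  exact vecMulVec_ne_zero (hv a) hy

end RankOneProducts

section Lines

/-- A vector spanning the line of slope `x` in `ℂ²` (for `true`), or its orthogonal complement
(for `false`). -/
def lineVector (x : ℝ) (b : Bool) : Fin 2 → ℂ :=
  bif b then ![1, x] else ![-x, 1]

/-- The orthogonal projection of `ℂ²` onto the line of slope `x`. -/
noncomputable def lineProjection (x : ℝ) : Matrix (Fin 2) (Fin 2) ℂ :=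
  vecMulVec ((1 + x ^ 2 : ℂ)⁻¹ • lineVector x true) (lineVector x true)

lemma one_add_sq_ne_zero (x : ℝ) : (1 + x ^ 2 : ℂ) ≠ 0 := by
  exact_mod_cast (by positivity : (1 + x ^ 2 : ℝ) ≠ 0)

lemma lineVector_dotProduct_self (x : ℝ) (b : Bool) :
    lineVector x b ⬝ᵥ lineVector x b = 1 + (x : ℂ) ^ 2 := by
  cases b <;> simp [lineVector, sq, add_comm]

lemma one_sub_lineProjection (x : ℝ) :
    1 - lineProjection x =
      vecMulVec ((1 + x ^ 2 : ℂ)⁻¹ • lineVector x false) (lineVector x false) := by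
  have hx := one_add_sq_ne_zero x
  ext i j
  fin_cases i <;> fin_cases j <;> simp [lineProjection, lineVector, vecMulVec_apply] <;>
    field_simp <;> ring

lemma isStarProjection_lineProjection (x : ℝ) : IsStarProjection (lineProjection x) where
  isIdempotentElem := by
    rw [IsIdempotentElem, lineProjection, vecMulVec_mul_vecMulVec, dotProduct_smul,
      lineVector_dotProduct_self, smul_eq_mul, inv_mul_cancel₀ (one_add_sq_ne_zero x), one_smul]
  isSelfAdjoint := by
    ext i j
    fin_cases i <;> fin_cases j <;>
      simp [lineProjection, lineVector, vecMulVec_apply, Matrix.star_apply]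

lemma trace_lineProjection (x : ℝ) : (lineProjection x).trace = 1 := by
  rw [lineProjection, trace_vecMulVec, smul_dotProduct, lineVector_dotProduct_self, smul_eq_mul,
    inv_mul_cancel₀ (one_add_sq_ne_zero x)]

lemma lineVector_ne_zero (x : ℝ) (b : Bool) : lineVector x b ≠ 0 := by
  cases b <;> simp [lineVector]

lemma lineVector_dotProduct_ne_zero {x y : ℝ} (hx : 0 ≤ x) (hy : 0 ≤ y) {b c : Bool}
    (h : x = y → b = c) : lineVector x b ⬝ᵥ lineVector y c ≠ 0 := by
  have hpos : (1 + x * y : ℂ) ≠ 0 := by exact_mod_cast (by positivity : (1 + x * y : ℝ) ≠ 0)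
  have hsub (hbc : b ≠ c) : (y - x : ℂ) ≠ 0 := by
    exact_mod_cast sub_ne_zero.2 fun hxy ↦ hbc (h hxy.symm)
  match b, c with
  | true, true => simpa [lineVector] using hpos
  | true, false => simpa [lineVector, neg_add_eq_sub] using neg_ne_zero.2 (hsub nofun)
  | false, true => simpa [lineVector, neg_add_eq_sub] using hsub nofun
  | false, false => simpa [lineVector, add_comm] using hpos

lemma prod_letterProjection_lineProjection_ne_zero {α : Type*} {x : α → ℝ}
    (hx : Function.Injective x) (hx0 : ∀ i, 0 ≤ x i) {L : List (α × Bool)} (hL₀ : L ≠ [])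
    (hL : FreeGroup.IsReduced L) :
    (L.map (letterProjection fun i ↦ lineProjection (x i))).prod ≠ 0 := by
  let u (a : α × Bool) : Fin 2 → ℂ := lineVector (x a.1) a.2
  let v (a : α × Bool) : Fin 2 → ℂ := (1 + x a.1 ^ 2 : ℂ)⁻¹ • u a
  have hletter : (letterProjection fun i ↦ lineProjection (x i)) =
      fun a ↦ vecMulVec (v a) (u a) := by
    funext ⟨i, b⟩
    cases b
    · exact one_sub_lineProjection (x i)
    · rfl
  have hu (a : α × Bool) : u a ≠ 0 := lineVector_ne_zero _ _
  have hv (a : α × Bool) : v a ≠ 0 := smul_ne_zero (inv_ne_zero (one_add_sq_ne_zero _)) (hu a)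
  have hchain : L.IsChain fun a b ↦ u a ⬝ᵥ v b ≠ 0 := hL.imp fun a b hab ↦ by
    rw [dotProduct_smul]
    exact smul_ne_zero (inv_ne_zero (one_add_sq_ne_zero _))
      (lineVector_dotProduct_ne_zero (hx0 _) (hx0 _) fun hxy ↦ hab (hx hxy))
  rw [hletter]
  exact prod_vecMulVec_ne_zero hv hu hL₀ hchain

end Lines

section SpecialUnitary

/-- `SU n` as a subgroup of the unitary group. -/
noncomputable def SUSubgroup (n : ℕ) : Subgroup (unitaryGroup (Fin n) ℂ) :=
  (detMonoidHom.comp (unitaryGroup (Fin n) ℂ).subtype).ker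

lemma mapsTo_conj_SU {n : ℕ} (U : unitaryGroup (Fin n) ℂ) :
    Set.MapsTo (MulAut.conj U) (SU n) (SU n) :=
  fun M hM ↦ (MonoidHom.normal_ker _ : (SUSubgroup n).Normal).conj_mem M hM U

lemma projectionRotation_mem_SU_two {p : Matrix (Fin 2) (Fin 2) ℂ} (hp : IsStarProjection p)
    (htr : p.trace = 1) (z : Circle) : projectionRotation hp z ∈ SU 2 := by
  have hdet : p.det = 0 := by
    have h00 := congr_fun₂ hp.isIdempotentElem.eq 0 0
    rw [Matrix.mul_apply, Fin.sum_univ_two] at h00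
    rw [trace_fin_two] at htr
    rw [det_fin_two]
    linear_combination p 0 0 * htr - h00
  change (projectionRotation hp z : Matrix (Fin 2) (Fin 2) ℂ).det = 1
  rw [coe_projectionRotation]
  rw [trace_fin_two] at htr
  rw [det_fin_two] at hdet ⊢
  have hz : (z : ℂ) ≠ 0 := z.coe_ne_zero
  simp only [Matrix.add_apply, Matrix.smul_apply, Matrix.sub_apply, smul_eq_mul, one_apply_eq,
    one_apply_ne zero_ne_one, one_apply_ne one_ne_zero]
  field_simp
  linear_combination ((z : ℂ) ^ 2 - 1) ^ 2 * hdet + ((z : ℂ) ^ 2 - 1) * htr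

lemma star_eq_adjugate_of_mem_SU {n : ℕ} {M : unitaryGroup (Fin n) ℂ} (hM : M ∈ SU n) :
    star (M : Matrix (Fin n) (Fin n) ℂ) = (M : Matrix (Fin n) (Fin n) ℂ).adjugate := by
  have hdet : (M : Matrix (Fin n) (Fin n) ℂ).det = 1 := hM
  calc star (M : Matrix (Fin n) (Fin n) ℂ)
      = star (M : Matrix (Fin n) (Fin n) ℂ) * (M * (M : Matrix (Fin n) (Fin n) ℂ).adjugate) := by
        rw [mul_adjugate, hdet, one_smul, mul_one]
    _ = (M : Matrix (Fin n) (Fin n) ℂ).adjugate := by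
        rw [← mul_assoc, UnitaryGroup.star_mul_self, one_mul]

variable {M : unitaryGroup (Fin 2) ℂ}

lemma eq_of_mem_SU_two (hM : M ∈ SU 2) :
    (M : Matrix (Fin 2) (Fin 2) ℂ) = !![M 0 0, -star (M 1 0); M 1 0, star (M 0 0)] := by
  have hadj := star_eq_adjugate_of_mem_SU hM
  rw [adjugate_fin_two] at hadj
  have h00 := congr_fun₂ hadj 0 0
  have h01 := congr_fun₂ hadj 0 1
  simp only [Matrix.star_apply, of_apply, cons_val', cons_val_zero, cons_val_one,
    cons_val_fin_one] at h00 h01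
  ext i j
  fin_cases i <;> fin_cases j <;> simp [h00, h01]

lemma normSq_add_normSq_of_mem_SU_two (hM : M ∈ SU 2) :
    Complex.normSq (M 0 0) + Complex.normSq (M 1 0) = 1 := by
  have hdet : (M : Matrix (Fin 2) (Fin 2) ℂ).det = 1 := hM
  rw [eq_of_mem_SU_two hM, det_fin_two_of] at hdet
  simp only [RCLike.star_def] at hdet
  have hsum : (Complex.normSq (M 0 0) + Complex.normSq (M 1 0) : ℂ) = 1 := by
    rw [← Complex.mul_conj, ← Complex.mul_conj]
    linear_combination hdet
  exact_mod_cast hsum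

lemma trace_of_mem_SU_two (hM : M ∈ SU 2) :
    trace (M : Matrix (Fin 2) (Fin 2) ℂ) = (2 * (M 0 0).re : ℝ) := by
  have htr := congrArg trace (eq_of_mem_SU_two hM)
  rwa [trace_fin_two_of, RCLike.star_def, Complex.add_conj] at htr

lemma trace_re_lt_two_of_mem_SU_two (hM : M ∈ SU 2) (h1 : M ≠ 1) :
    (trace (M : Matrix (Fin 2) (Fin 2) ℂ)).re < 2 := by
  rw [trace_of_mem_SU_two hM, Complex.ofReal_re]
  contrapose! h1
  have hnorm := normSq_add_normSq_of_mem_SU_two hM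
  simp only [Complex.normSq_apply] at hnorm
  have h00 : M 0 0 = 1 :=
    Complex.ext (by rw [Complex.one_re]; nlinarith) (by rw [Complex.one_im]; nlinarith)
  have h10 : M 1 0 = 0 :=
    Complex.ext (by rw [Complex.zero_re]; nlinarith) (by rw [Complex.zero_im]; nlinarith)
  refine Subtype.ext ?_
  rw [eq_of_mem_SU_two hM, h00, h10]
  simp [one_fin_two]

lemma exists_mulVec_eq_smul {K : Type*} [Field K] {M : Matrix (Fin 2) (Fin 2) K} {z : K}
    (hz : z ≠ 0) (hdet : M.det = 1) (htr : M.trace = z + z⁻¹) : ∃ v ≠ 0, M *ᵥ v = z • v := by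
  have hroot : (scalar (Fin 2) z - M).det = 0 := by
    rw [← eval_charpoly, charpoly_fin_two, hdet, htr]
    simp only [map_add, map_one, eval_add, eval_sub, eval_pow, eval_X, eval_mul, eval_C, eval_one]
    field_simp
    ring
  obtain ⟨v, hv, hMv⟩ := exists_mulVec_eq_zero_iff.2 hroot
  refine ⟨v, hv, ?_⟩
  rw [sub_mulVec, sub_eq_zero] at hMv
  simpa using hMv.symm

lemma exists_unitaryGroup_col_eq_smul {𝕜 ι : Type*} [RCLike 𝕜] [Fintype ι] [DecidableEq ι]
    {v : ι → 𝕜} (hv : v ≠ 0) (i : ι) :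
    ∃ (U : unitaryGroup ι 𝕜) (c : 𝕜), (U : Matrix ι ι 𝕜).col i = c • v := by
  let e : EuclideanSpace 𝕜 ι := WithLp.toLp 2 v
  have he : e ≠ 0 := by simpa [e] using hv
  let f : ι → EuclideanSpace 𝕜 ι := fun _ ↦ ((‖e‖ : 𝕜)⁻¹) • e
  have hf : Orthonormal 𝕜 (({i} : Set ι).domRestrict f) :=
    ⟨fun _ ↦ norm_smul_inv_norm he, fun a b hab ↦ (hab (Subsingleton.elim a b)).elim⟩
  obtain ⟨b, hb⟩ := hf.exists_orthonormalBasis_extension_of_card_eq (by simp)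
  refine ⟨⟨_, (EuclideanSpace.basisFun ι 𝕜).toMatrix_orthonormalBasis_mem_unitary b⟩,
    (‖e‖ : 𝕜)⁻¹, ?_⟩
  ext j
  simp [Module.Basis.toMatrix_apply, hb i rfl, f, e]

lemma exists_conj_eq_diagonal (hM : M ∈ SU 2) {z : Circle}
    (htr : (trace (M : Matrix (Fin 2) (Fin 2) ℂ)).re = 2 * (z : ℂ).re) :
    ∃ U : unitaryGroup (Fin 2) ℂ, (MulAut.conj U M : Matrix (Fin 2) (Fin 2) ℂ) =
      diagonal ![(z : ℂ), (z : ℂ)⁻¹] := by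
  have htr' : trace (M : Matrix (Fin 2) (Fin 2) ℂ) = z + (z : ℂ)⁻¹ := by
    rw [trace_of_mem_SU_two hM, Complex.ofReal_re] at htr
    rw [trace_of_mem_SU_two hM, htr, ← Circle.coe_inv, Circle.coe_inv_eq_conj, Complex.add_conj]
  obtain ⟨v, hv, hMv⟩ := exists_mulVec_eq_smul z.coe_ne_zero hM htr'
  obtain ⟨U, c, hUv⟩ := exists_unitaryGroup_col_eq_smul hv 0
  refine ⟨U⁻¹, ?_⟩
  set D := MulAut.conj U⁻¹ M with hD
  have hD_mem : D ∈ SU 2 := mapsTo_conj_SU U⁻¹ hM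
  have hcol : (D : Matrix (Fin 2) (Fin 2) ℂ).col 0 = (z : ℂ) • Pi.single 0 1 := by
    have hD_coe : (D : Matrix (Fin 2) (Fin 2) ℂ) =
        star (U : Matrix (Fin 2) (Fin 2) ℂ) * (M * U) := by
      rw [hD, MulAut.conj_apply, inv_inv, mul_assoc]; rfl
    rw [← mulVec_single_one, hD_coe, ← mulVec_mulVec, ← mulVec_mulVec, mulVec_single_one, hUv,
      mulVec_smul, hMv, smul_comm, ← hUv, mulVec_smul, ← mulVec_single_one, mulVec_mulVec,
      UnitaryGroup.star_mul_self, one_mulVec]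
  have hD00 : D 0 0 = z := by simpa using congr_fun hcol 0
  have hD10 : D 1 0 = 0 := by simpa using congr_fun hcol 1
  rw [eq_of_mem_SU_two hD_mem, hD00, hD10]
  ext i j
  fin_cases i <;> fin_cases j <;> simp [← Circle.coe_inv, Circle.coe_inv_eq_conj]

end SpecialUnitary

section NontrivialValue

lemma infinite_range_coe_circle : (Set.range fun z : Circle ↦ (z : ℂ)).Infinite := by
  have : Nontrivial Circle := ⟨1, -1, fun h ↦ by
    have hcoe : (1 : ℂ) = -1 := congrArg Circle.coeHom h
    norm_num at hcoe⟩
  have : Infinite Circle := PreconnectedSpace.infinite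
  exact Set.infinite_range_of_injective Circle.coe_injective

lemma exists_lift_projectionRotation_ne_one {α n : Type*} [DecidableEq α] [Fintype n]
    [DecidableEq n] {p : α → Matrix n n ℂ} (hp : ∀ i, IsStarProjection (p i)) {w : FreeGroup α}
    (hw : w ≠ 1) (hprod : (w.toWord.map (letterProjection p)).prod ≠ 0) :
    ∃ z : Circle, FreeGroup.lift (fun i ↦ projectionRotation (hp i) z) w ≠ 1 := by
  have hL : w.toWord ≠ [] := FreeGroup.toWord_eq_nil_iff.not.2 hw
  obtain ⟨-, ⟨z, rfl⟩, hz⟩ := exists_prod_smul_add_inv_smul_ne_one infinite_range_coe_circle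
    (letterProjection p) (fun a ↦ 1 - letterProjection p a) hL hprod
  refine ⟨z, fun h ↦ hz ?_⟩
  rw [← coe_lift_projectionRotation hp, FreeGroup.mk_toWord, h, OneMemClass.coe_one]

/-- The circle of elements of `SU(2)` substituted for the `i`-th generator: the rotations about the
line of slope `i`. -/
noncomputable def generatorRotation {d : ℕ} (i : Fin d) : Circle →* unitaryGroup (Fin 2) ℂ :=
  projectionRotation (isStarProjection_lineProjection (i : ℕ))

lemma exists_lift_generatorRotation_ne_one {d : ℕ} {w : FreeGroup (Fin d)} (hw : w ≠ 1) :
    ∃ z : Circle, FreeGroup.lift (generatorRotation · z) w ≠ 1 := by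
  have hslope : Function.Injective fun i : Fin d ↦ ((i : ℕ) : ℝ) :=
    Nat.cast_injective.comp Fin.val_injective
  have hL : w.toWord ≠ [] := FreeGroup.toWord_eq_nil_iff.not.2 hw
  exact exists_lift_projectionRotation_ne_one _ hw
    (prod_letterProjection_lineProjection_ne_zero hslope (fun i ↦ Nat.cast_nonneg _) hL
      FreeGroup.isReduced_toWord)

end NontrivialValue

theorem diag_root_of_unity_mem_wordValues_general {d : ℕ} (w : FreeGroup (Fin d)) (hw : w ≠ 1) :
    ∀ᶠ z : Circle in 𝓝 1, ∃ u ∈ wordValuesIn w (SU 2),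
      (u : Matrix (Fin 2) (Fin 2) ℂ) = diagonal ![(z : ℂ), (z : ℂ)⁻¹] := by
  let W (s : Circle) : unitaryGroup (Fin 2) ℂ := FreeGroup.lift (generatorRotation · s) w
  have hg (s : Circle) (i : Fin d) : generatorRotation i s ∈ SU 2 :=
    projectionRotation_mem_SU_two _ (trace_lineProjection _) s
  have hW (s : Circle) : W s ∈ SU 2 := lift_mem_of_forall_mem (H := SUSubgroup 2) (hg s) w
  let f (s : Circle) : ℝ := (trace (W s : Matrix (Fin 2) (Fin 2) ℂ)).re
  have hf : Continuous f := by
    have hW_cont : Continuous W := continuous_lift_apply (fun i ↦ continuous_projectionRotation _) w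
    fun_prop
  have hW1 : W 1 = 1 :=
    Subgroup.mem_bot.1 (lift_mem_of_forall_mem (fun i ↦ Subgroup.mem_bot.2 (map_one _)) w)
  have hf1 : f 1 = 2 := by simp [f, hW1]
  obtain ⟨s₀, hs₀⟩ := exists_lift_generatorRotation_ne_one hw
  have hfs₀ : f s₀ < 2 := trace_re_lt_two_of_mem_SU_two (hW s₀) hs₀
  have hnear : ∀ᶠ z : Circle in 𝓝 1, f s₀ < 2 * (z : ℂ).re :=
    have hre : Continuous fun z : Circle ↦ 2 * (z : ℂ).re := by fun_prop
    hre.continuousAt.eventually_const_lt (by simpa using hfs₀)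
  filter_upwards [hnear] with z hz
  have hz2 : 2 * (z : ℂ).re ≤ 2 := by linarith [Complex.re_le_norm (z : ℂ), z.norm_coe]
  obtain ⟨s, hs⟩ := mem_range_of_exists_le_of_exists_ge hf ⟨s₀, hz.le⟩ ⟨1, hz2.trans_eq hf1.symm⟩
  obtain ⟨U, hU⟩ := exists_conj_eq_diagonal (hW s) hs
  exact ⟨_, map_mem_wordValuesIn (MulAut.conj U).toMonoidHom (mapsTo_conj_SU U) ⟨_, hg s, rfl⟩, hU⟩

/-- For every nontrivial word `w ∈ F_d`, there is `N` such that for all `n ≥ N`,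
`diag(e^{2πi/n}, e^{-2πi/n})` is a `w`-value in `SU(2)`. -/
theorem diag_root_of_unity_mem_wordValues {d : ℕ} (w : FreeGroup (Fin d)) (hw : w ≠ 1) :
    ∃ N : ℕ, ∀ n : ℕ, N ≤ n →
      ∃ u ∈ wordValuesIn w (SU 2),
        (u : Matrix (Fin 2) (Fin 2) ℂ) =
          Matrix.diagonal
            ![Complex.exp (2 * Real.pi * Complex.I / n),
              Complex.exp (-(2 * Real.pi * Complex.I) / n)] := by
  have hlim : Tendsto (fun n : ℕ ↦ Circle.exp (2 * Real.pi / n)) atTop (𝓝 1) := by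
    rw [← Circle.exp_zero]
    exact (Circle.exp.continuous.tendsto 0).comp (tendsto_const_div_atTop_nhds_zero_nat _)
  obtain ⟨N, hN⟩ :=
    eventually_atTop.1 (hlim.eventually (diag_root_of_unity_mem_wordValues_general w hw))
  refine ⟨N, fun n hn ↦ ?_⟩
  simpa [Circle.coe_exp, ← Complex.exp_neg, neg_div, div_mul_eq_mul_div] using hN n hn
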